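/- Let ν be a lattice path with m east and n north steps. The map μ ↦ b(μ) is an order isomorphism from the ν-Tamari lattice Tam(ν) onto the set of ν-bracket vectors ordered componentwise; in particular, the componentwise order on ν-bracket vectors is a lattice isomorphic to the ν-Tamari lattice. -/

import Mathlib

open scoped Classical

/-! Lattice paths: `true` = north step, `false` = east step. -/

def eastSteps (ν : List Bool) : ℕ := ν.count false
def northSteps (ν : List Bool) : ℕ := ν.count true

/-- Height at which the path first reaches abscissa `x`. -/
def heightAt : List Bool → ℕ → ℕ
  | _, 0 => 0
  | [], _ + 1 => 0
  | true :: rest, x + 1 => heightAt rest (x + 1) + 1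
  | false :: rest, x + 1 => heightAt rest x

/-- Lattice point of a path after `i` steps. -/
def pointAt (μ : List Bool) (i : ℕ) : ℕ × ℕ :=
  ((μ.take i).count false, (μ.take i).count true)

/-- The set `A_ν` of lattice points weakly above `ν`. -/
def APts (ν : List Bool) : Set (ℕ × ℕ) :=
  {p | p.1 ≤ eastSteps ν ∧ heightAt ν p.1 ≤ p.2 ∧ p.2 ≤ northSteps ν}

def Incompatible (ν : List Bool) (p q : ℕ × ℕ) : Prop :=
  (p.1 < q.1 ∧ p.2 < q.2 ∧ (q.1, p.2) ∈ APts ν) ∨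
    (q.1 < p.1 ∧ q.2 < p.2 ∧ (p.1, q.2) ∈ APts ν)

def Compatible (ν : List Bool) (p q : ℕ × ℕ) : Prop := ¬ Incompatible ν p q

def IsNuTree (ν : List Bool) (T : Set (ℕ × ℕ)) : Prop :=
  T ⊆ APts ν ∧ T.Pairwise (Compatible ν) ∧
    ∀ T', T' ⊆ APts ν → T'.Pairwise (Compatible ν) → T ⊆ T' → T' = T

def IsRightRotationAt (T T' : Set (ℕ × ℕ)) (q q' : ℕ × ℕ) : Prop :=
  ∃ x y x'' y', q = (x, y) ∧ q' = (x'', y') ∧ x < x'' ∧ y < y' ∧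
    (x, y) ∈ T ∧ (x, y') ∈ T ∧ (x'', y) ∈ T ∧
    (∀ b, y < b → b < y' → (x, b) ∉ T) ∧
    (∀ a, x < a → a < x'' → (a, y) ∉ T) ∧
    (∀ a, x < a → a < x'' → (a, y') ∉ T) ∧
    (∀ b, y < b → b < y' → (x'', b) ∉ T) ∧
    T' = (T \ {(x, y)}) ∪ {(x'', y')}

def IsRightRotation (T T' : Set (ℕ × ℕ)) : Prop :=
  ∃ q q', IsRightRotationAt T T' q q'

/-- Order relation of the rotation poset of ν-trees. -/
def TreeLE (ν : List Bool) : Set (ℕ × ℕ) → Set (ℕ × ℕ) → Prop :=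
  Relation.ReflTransGen fun A B => IsNuTree ν A ∧ IsNuTree ν B ∧ IsRightRotation A B

def IsNuPath (ν μ : List Bool) : Prop :=
  eastSteps μ = eastSteps ν ∧ northSteps μ = northSteps ν ∧
    ∀ i ≤ μ.length, pointAt μ i ∈ APts ν

noncomputable def horiz (ν : List Bool) (p : ℕ × ℕ) : ℕ :=
  sSup {k | (p.1 + k, p.2) ∈ APts ν}

/-- Covering relation of the ν-Tamari lattice. -/
def TamariCover (ν μ μ' : List Bool) : Prop :=
  IsNuPath ν μ ∧ IsNuPath ν μ' ∧
    ∃ i j, 0 < i ∧ i < j ∧ j ≤ μ.length ∧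
      μ.getD (i - 1) true = false ∧ μ.getD i false = true ∧
      horiz ν (pointAt μ j) = horiz ν (pointAt μ i) ∧
      (∀ k, i < k → k < j → horiz ν (pointAt μ k) ≠ horiz ν (pointAt μ i)) ∧
      μ' = μ.take (i - 1) ++ (μ.drop i).take (j - i) ++ [false] ++ μ.drop j

def TamariLE (ν : List Bool) : List Bool → List Bool → Prop :=
  Relation.ReflTransGen (TamariCover ν)

/-! Flushing maps -/

def rowAvail (ν : List Bool) (y : ℕ) : List ℕ :=
  ((List.range (eastSteps ν + 1)).filter fun x => decide (heightAt ν x ≤ y)).reverse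

def pointsAtHeight (μ : List Bool) (y : ℕ) : ℕ :=
  ((List.range (μ.length + 1)).filter fun i => decide ((μ.take i).count true = y)).length

def rflushAux (ν : List Bool) : List ℕ → ℕ → List ℕ → List (ℕ × ℕ)
  | [], _, _ => []
  | c :: rest, y, forbidden =>
    let placed := ((rowAvail ν y).filter fun x => decide (x ∉ forbidden)).take c
    placed.map (fun x => (x, y)) ++ rflushAux ν rest (y + 1) (forbidden ++ placed.dropLast)

/-- Right-flushing map `R`. -/
def Rflush (ν μ : List Bool) : Set (ℕ × ℕ) :=
  {p | p ∈ rflushAux ν ((List.range (northSteps ν + 1)).map (pointsAtHeight μ)) 0 []}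

def lflushAux (m : ℕ) : List ℕ → ℕ → List ℕ → List (ℕ × ℕ)
  | [], _, _ => []
  | c :: rest, y, forbidden =>
    let placed := ((List.range (m + 1)).filter fun x => decide (x ∉ forbidden)).take c
    placed.map (fun x => (x, y)) ++ lflushAux m rest (y + 1) (forbidden ++ placed.dropLast)

noncomputable def rowCount (T : Set (ℕ × ℕ)) (y : ℕ) : ℕ := {x | (x, y) ∈ T}.ncard

/-- Left-flushing map `L`. -/
noncomputable def Lflush (ν : List Bool) (T : Set (ℕ × ℕ)) : Set (ℕ × ℕ) :=
  {p | p ∈ lflushAux (eastSteps ν) ((List.range (northSteps ν + 1)).map (rowCount T)) 0 []}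

def pathPointSet (μ : List Bool) : Set (ℕ × ℕ) := {p | ∃ i ≤ μ.length, pointAt μ i = p}

/-! Bracket vectors (0-indexed positions `0,…,ℓ`). -/

noncomputable def fpos (ν : List Bool) (k : ℕ) : ℕ :=
  sSup {i | i ≤ ν.length ∧ (ν.take i).count true = k}

def bmin (ν : List Bool) : List ℕ :=
  (List.range (ν.length + 1)).map fun i => (ν.take i).count true

def IsBracketVector (ν : List Bool) (b : List ℕ) : Prop :=
  b.length = ν.length + 1 ∧
    (∀ k ≤ northSteps ν, b.getD (fpos ν k) 0 = k) ∧
    (∀ i < b.length, (bmin ν).getD i 0 ≤ b.getD i 0 ∧ b.getD i 0 ≤ northSteps ν) ∧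
    ∀ i j k, i < j → j < k → k < b.length →
      ¬(b.getD i 0 = b.getD k 0 ∧ b.getD i 0 < b.getD j 0)

noncomputable def leftChild (T : Set (ℕ × ℕ)) (p : ℕ × ℕ) : Option (ℕ × ℕ) :=
  if ∃ b, (p.1, b) ∈ T ∧ b < p.2 then some (p.1, sSup {b | (p.1, b) ∈ T ∧ b < p.2})
  else none

noncomputable def rightChild (T : Set (ℕ × ℕ)) (p : ℕ × ℕ) : Option (ℕ × ℕ) :=
  if ∃ a, (a, p.2) ∈ T ∧ p.1 < a then
    if ∃ b, (sInf {a | (a, p.2) ∈ T ∧ p.1 < a}, b) ∈ T ∧ p.2 < b then none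
    else some (sInf {a | (a, p.2) ∈ T ∧ p.1 < a}, p.2)
  else none

noncomputable def inorderAux (T : Set (ℕ × ℕ)) : ℕ → ℕ × ℕ → List (ℕ × ℕ)
  | 0, _ => []
  | fuel + 1, p =>
    (match leftChild T p with
      | none => []
      | some l => inorderAux T fuel l) ++ p ::
      (match rightChild T p with
        | none => []
        | some r => inorderAux T fuel r)

/-- Bracket vector of a ν-tree: y-coordinates read in in-order from the root `(0,n)`. -/
noncomputable def bracketOfTree (ν : List Bool) (T : Set (ℕ × ℕ)) : List ℕ :=
  (inorderAux T T.ncard (0, northSteps ν)).map Prod.snd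

noncomputable def bracketAssign (ν μ : List Bool) : List (ℕ × ℕ) :=
  ((List.range (northSteps ν + 1)).foldl
    (fun (st : List (ℕ × ℕ) × List ℕ) k =>
      let picked := ((st.2.filter fun i => decide (i ≤ fpos ν k)).reverse).take
        (pointsAtHeight μ k)
      (st.1 ++ picked.map fun i => (i, k), st.2.filter fun i => decide (i ∉ picked)))
    ([], List.range (ν.length + 1))).1

/-- Bracket vector of a ν-path. -/
noncomputable def bracketOfPath (ν μ : List Bool) : List ℕ :=
  (List.range (ν.length + 1)).map fun i => ((bracketAssign ν μ).lookup i).getD 0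

/-- Componentwise order on (equal length) integer vectors. -/
def listLE (b b' : List ℕ) : Prop :=
  b.length = b'.length ∧ ∀ i, b.getD i 0 ≤ b'.getD i 0

/-! Reversal -/

def revPath (ν : List Bool) : List Bool := ν.reverse.map fun s => !s

def revTree (ν : List Bool) (T : Set (ℕ × ℕ)) : Set (ℕ × ℕ) :=
  (fun p : ℕ × ℕ => (northSteps ν - p.2, eastSteps ν - p.1)) '' T

/-! Pipe dreams and subword complexes -/

def dOf (ν : List Bool) (p : ℕ × ℕ) : ℕ := p.1 + (northSteps ν - p.2)

def labelPerm (ν : List Bool) (p : ℕ × ℕ) : Equiv.Perm ℕ :=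
  Equiv.swap (dOf ν p + 1) (dOf ν p + 2)

/-- The points of `A_ν` in reading order: rows from bottom to top, each left to right. -/
def readingList (ν : List Bool) : List (ℕ × ℕ) :=
  ((List.range (northSteps ν + 1)).map fun y =>
    ((List.range (eastSteps ν + 1)).filter fun x => decide (heightAt ν x ≤ y)).map
      fun x => (x, y)).flatten

/-- The minimal ν-tree. -/
def TminSet (ν : List Bool) : Set (ℕ × ℕ) :=
  {p | p ∈ APts ν ∧ (p.1 = 0 ∨ ∃ i < ν.length, ν.getD i true = false ∧ p = pointAt ν (i + 1))}

noncomputable def prodOver (ν : List Bool) (C : Set (ℕ × ℕ)) : Equiv.Perm ℕ :=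
  (((readingList ν).filter fun p => decide (p ∈ C)).map (labelPerm ν)).prod

/-- Coxeter length: number of inversions. -/
noncomputable def lenInv (π : Equiv.Perm ℕ) : ℕ :=
  {q : ℕ × ℕ | q.1 < q.2 ∧ π q.2 < π q.1}.ncard

noncomputable def piNu (ν : List Bool) : Equiv.Perm ℕ := prodOver ν (APts ν \ TminSet ν)

def Qword (ν : List Bool) : List (Equiv.Perm ℕ) := (readingList ν).map (labelPerm ν)

noncomputable def prodAt (Q : List (Equiv.Perm ℕ)) (P : Finset ℕ) : Equiv.Perm ℕ :=
  (((List.range Q.length).filter fun i => decide (i ∈ P)).map fun i => Q.getD i 1).prod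

def IsFacet (Q : List (Equiv.Perm ℕ)) (π : Equiv.Perm ℕ) (I : Finset ℕ) : Prop :=
  I ⊆ Finset.range Q.length ∧
    prodAt Q (Finset.range Q.length \ I) = π ∧
    (Finset.range Q.length \ I).card = lenInv π

def IncFlip (Q : List (Equiv.Perm ℕ)) (π : Equiv.Perm ℕ) (I J : Finset ℕ) : Prop :=
  IsFacet Q π I ∧ IsFacet Q π J ∧ ∃ i ∈ I, ∃ j ∈ J, i < j ∧ I.erase i = J.erase j

def FlipLE (Q : List (Equiv.Perm ℕ)) (π : Equiv.Perm ℕ) : Finset ℕ → Finset ℕ → Prop :=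
  Relation.ReflTransGen (IncFlip Q π)

/-- The maximal ν-tree. -/
def TmaxSet (ν : List Bool) : Set (ℕ × ℕ) :=
  {p | (p.1 ≤ eastSteps ν ∧ p.2 = northSteps ν) ∨ ∃ i < ν.length, ν.getD i false = true ∧ p = pointAt ν i}


namespace NuBr

/-- Height of the `i`-th point of a path. -/
def hgt (μ : List Bool) (i : ℕ) : ℕ := (μ.take i).count true

theorem hgt_zero (μ : List Bool) : hgt μ 0 = 0 := by simp [hgt]

theorem hgt_mono (μ : List Bool) {i j : ℕ} (h : i ≤ j) : hgt μ i ≤ hgt μ j := by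
  unfold hgt
  exact (List.take_sublist_take_left h).count_le true

theorem hgt_succ (μ : List Bool) (i : ℕ) :
    hgt μ (i + 1) = hgt μ i + if μ.getD i false = true then 1 else 0 := by
  unfold hgt
  rw [List.take_add_one, List.count_append]
  congr 1
  rw [List.getD_eq_getElem?_getD]
  cases h : μ[i]? with
  | none => simp
  | some a => cases a <;> simp

theorem hgt_succ_le (μ : List Bool) (i : ℕ) : hgt μ (i + 1) ≤ hgt μ i + 1 := by
  rw [hgt_succ]; split_ifs <;> omega

theorem hgt_of_le (μ : List Bool) {i : ℕ} (h : μ.length ≤ i) : hgt μ i = northSteps μ := by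
  unfold hgt northSteps
  rw [List.take_of_length_le h]

theorem hgt_le (μ : List Bool) (i : ℕ) : hgt μ i ≤ i := by
  unfold hgt
  exact (List.count_le_length).trans (by simp)

theorem hgt_le_north (μ : List Bool) (i : ℕ) : hgt μ i ≤ northSteps μ := by
  unfold hgt northSteps
  exact (List.take_sublist _ _).count_le true

theorem east_add_north (μ : List Bool) : eastSteps μ + northSteps μ = μ.length := by
  unfold eastSteps northSteps
  induction μ with
  | nil => simp
  | cons a t ih => cases a <;> simp <;> omega

theorem pointAt_eq (μ : List Bool) {i : ℕ} (h : i ≤ μ.length) :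
    pointAt μ i = (i - hgt μ i, hgt μ i) := by
  have := east_add_north (μ.take i)
  unfold eastSteps northSteps at this
  unfold pointAt hgt
  rw [List.length_take, min_eq_left h] at this
  ext <;> simp
  omega

theorem hgt_surj (μ : List Bool) (i : ℕ) : ∀ k ≤ hgt μ i, ∃ j ≤ i, hgt μ j = k := by
  induction i with
  | zero => intro k hk; exact ⟨0, le_rfl, by rw [hgt_zero] at *; omega⟩
  | succ i ih =>
    intro k hk
    by_cases h : k ≤ hgt μ i
    · obtain ⟨j, hj, e⟩ := ih k h
      exact ⟨j, by omega, e⟩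
    · exact ⟨i + 1, le_rfl, by have := hgt_succ_le μ i; omega⟩

theorem heightAt_le_iff (ν : List Bool) (x y : ℕ) :
    heightAt ν x ≤ y ↔ hgt ν (x + y) ≤ y := by
  induction ν generalizing x y with
  | nil => cases x <;> simp [heightAt, hgt]
  | cons a t ih =>
    cases x with
    | zero => simpa [heightAt] using hgt_le _ _
    | succ x =>
      cases a with
      | false =>
        have h : x + 1 + y = (x + y) + 1 := by omega
        simp only [heightAt, ih]
        rw [h]; simp [hgt]
      | true =>
        cases y with
        | zero => simp [heightAt, hgt]
        | succ y =>
          have h : x + 1 + (y + 1) = (x + 1 + y) + 1 := by omega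
          simp only [heightAt, Nat.add_le_add_iff_right, ih]
          rw [h]; simp [hgt]

/-! facts about `fpos` -/

theorem fpos_spec (ν : List Bool) {k : ℕ} (hk : k ≤ northSteps ν) :
    fpos ν k ≤ ν.length ∧ hgt ν (fpos ν k) = k := by
  have hne : {i | i ≤ ν.length ∧ (ν.take i).count true = k}.Nonempty := by
    obtain ⟨j, hj, e⟩ := hgt_surj ν ν.length k (by rw [hgt_of_le ν le_rfl]; exact hk)
    exact ⟨j, hj, e⟩
  have hb : BddAbove {i | i ≤ ν.length ∧ (ν.take i).count true = k} :=
    ⟨ν.length, fun i hi => hi.1⟩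
  exact Nat.sSup_mem hne hb

theorem le_fpos_iff (ν : List Bool) {k : ℕ} (hk : k ≤ northSteps ν) {i : ℕ}
    (hi : i ≤ ν.length) : i ≤ fpos ν k ↔ hgt ν i ≤ k := by
  obtain ⟨h1, h2⟩ := fpos_spec ν hk
  constructor
  · intro h
    have := hgt_mono ν h
    omega
  · intro h
    by_contra hlt
    have h3 := hgt_mono ν (show fpos ν k ≤ i by omega)
    have hb : BddAbove {i | i ≤ ν.length ∧ (ν.take i).count true = k} :=
      ⟨ν.length, fun i hi => hi.1⟩
    have h4 : i ∈ {i | i ≤ ν.length ∧ (ν.take i).count true = k} := by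
      refine ⟨hi, ?_⟩
      change hgt ν i = k
      omega
    have := le_csSup hb h4
    exact hlt this

theorem fpos_lt (ν : List Bool) {j k : ℕ} (hjk : j < k) (hk : k ≤ northSteps ν) :
    fpos ν j < fpos ν k := by
  obtain ⟨h1, h2⟩ := fpos_spec ν hk
  by_contra h
  have := (le_fpos_iff ν (by omega : j ≤ northSteps ν) h1).1 (by omega)
  omega

theorem fpos_last (ν : List Bool) : fpos ν (northSteps ν) = ν.length := by
  have h1 := (fpos_spec ν (le_refl (northSteps ν))).1
  have := (le_fpos_iff ν le_rfl (le_refl ν.length)).2 (hgt_le_north _ _)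
  omega

theorem mem_APts_iff (ν : List Bool) (x y : ℕ) :
    (x, y) ∈ APts ν ↔ y ≤ northSteps ν ∧ x + y ≤ fpos ν y := by
  have hE := east_add_north ν
  unfold APts
  simp only [Set.mem_ofPred_eq, heightAt_le_iff]
  constructor
  · rintro ⟨h1, h2, h3⟩
    exact ⟨h3, (le_fpos_iff ν h3 (by omega)).2 h2⟩
  · rintro ⟨h1, h2⟩
    obtain ⟨h3, h4⟩ := fpos_spec ν h1
    refine ⟨?_, (le_fpos_iff ν h1 (by omega)).1 h2, h1⟩
    have h5 := pointAt_eq ν h3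
    have h6 : (pointAt ν (fpos ν y)).1 ≤ eastSteps ν := by
      unfold pointAt eastSteps
      exact (List.take_sublist _ _).count_le false
    rw [h5] at h6
    simp only at h6
    omega

theorem horiz_eq (ν : List Bool) {x y : ℕ} (h : (x, y) ∈ APts ν) :
    horiz ν (x, y) = fpos ν y - (x + y) := by
  rw [mem_APts_iff] at h
  unfold horiz
  have : {k | (x + k, y) ∈ APts ν} = Set.Iic (fpos ν y - (x + y)) := by
    ext k
    simp only [Set.mem_ofPred_eq, mem_APts_iff, Set.mem_Iic]
    omega
  simp only [this]
  exact csSup_Iic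

theorem nuPath_iff (ν μ : List Bool) :
    IsNuPath ν μ ↔ μ.length = ν.length ∧ northSteps μ = northSteps ν ∧
      ∀ i ≤ ν.length, i ≤ fpos ν (hgt μ i) := by
  have e1 := east_add_north ν
  have e2 := east_add_north μ
  unfold IsNuPath
  constructor
  · rintro ⟨h1, h2, h3⟩
    have hl : μ.length = ν.length := by omega
    refine ⟨hl, h2, fun i hi => ?_⟩
    have := h3 i (by omega)
    rw [pointAt_eq μ (by omega), mem_APts_iff] at this
    have := hgt_le μ i
    omega
  · rintro ⟨h1, h2, h3⟩
    refine ⟨by omega, h2, fun i hi => ?_⟩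
    rw [pointAt_eq μ (by omega), mem_APts_iff]
    have := hgt_le μ i
    have := h3 i (by omega)
    have := hgt_le_north μ i
    omega

theorem horiz_point (ν μ : List Bool) (h : IsNuPath ν μ) {i : ℕ} (hi : i ≤ ν.length) :
    horiz ν (pointAt μ i) = fpos ν (hgt μ i) - i := by
  have h' := (nuPath_iff ν μ).1 h
  have hm := h.2.2 i (by omega)
  rw [pointAt_eq μ (by omega)] at hm ⊢
  rw [horiz_eq ν hm]
  have := hgt_le μ i
  congr 1; omega

/-! counting -/

/-- number of positions `i ≤ ℓ` with `g i < k`. -/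
def Cx (ℓ : ℕ) (g : ℕ → ℕ) (k : ℕ) : ℕ := ((Finset.range (ℓ + 1)).filter (fun i => g i < k)).card

/-- positions in the first `k` rows of a path form an initial segment. -/
theorem hgt_lt_iff (μ : List Bool) {i : ℕ} (ℓ : ℕ) (hi : i ≤ ℓ) (k : ℕ) :
    hgt μ i < k ↔ i < Cx ℓ (hgt μ) k := by
  unfold Cx
  constructor
  · intro h
    have : Finset.range (i + 1) ⊆ (Finset.range (ℓ + 1)).filter (fun i => hgt μ i < k) := by
      intro j hj
      simp only [Finset.mem_range, Finset.mem_filter] at *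
      have := hgt_mono μ (show j ≤ i by omega)
      omega
    have := Finset.card_le_card this
    rw [Finset.card_range] at this
    omega
  · intro h
    by_contra hc
    have : (Finset.range (ℓ + 1)).filter (fun i => hgt μ i < k) ⊆ Finset.range i := by
      intro j hj
      simp only [Finset.mem_range, Finset.mem_filter] at *
      by_contra hji
      have := hgt_mono μ (show i ≤ j by omega)
      omega
    have := Finset.card_le_card this
    rw [Finset.card_range] at this
    omega

theorem hgt_ext {μ μ' : List Bool} (hl : μ.length = μ'.length)
    (h : ∀ i ≤ μ.length, hgt μ i = hgt μ' i) : μ = μ' := by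
  apply List.ext_getElem hl
  intro i h1 h2
  have a := hgt_succ μ i
  have b := hgt_succ μ' i
  rw [h i (by omega), h (i + 1) (by omega)] at a
  rw [b] at a
  rw [List.getD_eq_getElem _ _ h1, List.getD_eq_getElem _ _ h2] at a
  cases h3 : μ[i] <;> cases h4 : μ'[i] <;> simp [h3, h4] at a ⊢

theorem path_ext {μ μ' : List Bool} (hl : μ.length = μ'.length)
    (h : ∀ k, Cx μ.length (hgt μ) k = Cx μ.length (hgt μ') k) : μ = μ' := by
  apply hgt_ext hl
  intro i hi
  have key : ∀ k, hgt μ i < k ↔ hgt μ' i < k := by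
    intro k
    rw [hgt_lt_iff μ μ.length hi, hgt_lt_iff μ' μ.length hi, h]
  have a := (key (hgt μ i + 1)).1 (by omega)
  have b := (key (hgt μ' i + 1)).2 (by omega)
  omega

theorem hgt_append (A B : List Bool) (t : ℕ) :
    hgt (A ++ B) t = hgt A t + hgt B (t - A.length) := by
  simp [hgt, List.take_append]

/-- existence of a path with given cumulative row sizes. -/
theorem exists_path (C : ℕ → ℕ) (h0 : C 0 = 0) (n : ℕ) (hC : ∀ k ≤ n, C k < C (k + 1)) :
    ∃ μ : List Bool, μ.length + 1 = C (n + 1) ∧ northSteps μ = n ∧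
      ∀ i ≤ μ.length, ∀ k ≤ n + 1, hgt μ i < k ↔ i < C k := by
  have hr : ∀ r, (List.replicate r false).count true = 0 := by
    intro r; simp [List.count_replicate]
  induction n with
  | zero =>
    refine ⟨List.replicate (C 1 - 1) false, ?_, ?_, ?_⟩
    · have := hC 0 le_rfl
      simp at this ⊢; omega
    · exact hr _
    · intro i hi k hk
      have h1 := hgt_le_north (List.replicate (C 1 - 1) false) i
      have h2 : northSteps (List.replicate (C 1 - 1) false) = 0 := hr _
      have := hC 0 le_rfl
      simp only [List.length_replicate] at hi
      have hk : k = 0 ∨ k = 1 := by omega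
      rcases hk with rfl | rfl
      · omega
      · simp at this ⊢
        omega
  | succ n ih =>
    obtain ⟨μ, h1, h2, h3⟩ := ih (fun k hk => hC k (by omega))
    have hn : C (n + 1) < C (n + 2) := hC (n + 1) le_rfl
    have hn2 : C (n + 1 + 1) = C (n + 2) := rfl
    refine ⟨μ ++ (true :: List.replicate (C (n + 2) - C (n + 1) - 1) false), ?_, ?_, ?_⟩
    · simp only [List.length_append, List.length_cons, List.length_replicate]; omega
    · unfold northSteps at *
      simp [h2, List.count_replicate]
    · intro i hi k hk
      have hmono : C k ≤ C (n + 2) := by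
        rcases Nat.lt_or_ge k (n + 2) with h | h
        · have : ∀ d, k + d ≤ n + 2 → C k ≤ C (k + d) := by
            intro d
            induction d with
            | zero => intro; simp
            | succ d ihd =>
              intro hd
              have := ihd (by omega)
              have := hC (k + d) (by omega)
              rw [← add_assoc]; omega
          have := this (n + 2 - k) (by omega)
          rwa [show k + (n + 2 - k) = n + 2 by omega] at this
        · rw [show k = n + 2 by omega]
      have hmono' : k ≤ n + 1 → C k ≤ C (n + 1) := by
        intro hk'
        rcases Nat.lt_or_ge k (n + 1) with h | h
        · have := (h3 μ.length le_rfl k (by omega))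
          rw [hgt_of_le μ le_rfl, h2] at this
          omega
        · rw [show k = n + 1 by omega]
      rw [hgt_append]
      by_cases hi' : i ≤ μ.length
      · rw [show i - μ.length = 0 by omega, hgt_zero, add_zero]
        by_cases hkn : k ≤ n + 1
        · exact h3 i hi' k hkn
        · have : k = n + 2 := by omega
          subst this
          have := hgt_le_north μ i
          constructor <;> intro <;> omega
      · obtain ⟨d, hd⟩ : ∃ d, i - μ.length = d + 1 := ⟨i - μ.length - 1, by omega⟩
        rw [hd, hgt_of_le μ (by omega), h2]
        have : hgt (true :: List.replicate (C (n + 2) - C (n + 1) - 1) false) (d + 1) = 1 := by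
          simp [hgt, List.count_replicate]
        rw [this]
        simp only [List.length_append, List.length_cons, List.length_replicate] at hi
        constructor
        · intro h
          have : k = n + 2 := by omega
          subst this; omega
        · intro h
          by_contra hk2
          have := hmono' (by omega)
          omega

/-- functional form of bracket vectors. -/
structure Bv (ν : List Bool) (b : ℕ → ℕ) : Prop where
  fix : ∀ k ≤ northSteps ν, b (fpos ν k) = k
  low : ∀ i ≤ ν.length, hgt ν i ≤ b i
  up : ∀ i ≤ ν.length, b i ≤ northSteps ν
  av : ∀ i j k, i < j → j < k → k ≤ ν.length → ¬(b i = b k ∧ b i < b j)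

theorem bmin_getD (ν : List Bool) {i : ℕ} (hi : i ≤ ν.length) : (bmin ν).getD i 0 = hgt ν i := by
  unfold bmin hgt
  rw [List.getD_eq_getElem _ _ (by simp; omega)]
  simp

theorem isBracket_iff (ν : List Bool) (l : List ℕ) :
    IsBracketVector ν l ↔ l.length = ν.length + 1 ∧ Bv ν (fun i => l.getD i 0) := by
  unfold IsBracketVector
  constructor
  · rintro ⟨h1, h2, h3, h4⟩
    refine ⟨h1, h2, fun i hi => ?_, fun i hi => (h3 i (by omega)).2,
      fun i j k hij hjk hk => h4 i j k hij hjk (by omega)⟩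
    rw [← bmin_getD ν hi]; exact (h3 i (by omega)).1
  · rintro ⟨h1, h2⟩
    refine ⟨h1, h2.fix, fun i hi => ⟨?_, h2.up i (by omega)⟩,
      fun i j k hij hjk hk => h2.av i j k hij hjk (by omega)⟩
    rw [bmin_getD ν (by omega)]; exact h2.low i (by omega)

namespace Bv
variable {ν : List Bool} {b : ℕ → ℕ}

theorem le_f (h : Bv ν b) {i : ℕ} (hi : i ≤ ν.length) : i ≤ fpos ν (b i) :=
  (le_fpos_iff ν (h.up i hi) hi).2 (h.low i hi)

theorem le_f' (h : Bv ν b) {i k : ℕ} (hi : i ≤ ν.length) (hk : k ≤ northSteps ν)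
    (hb : b i ≤ k) : i ≤ fpos ν k :=
  (le_fpos_iff ν hk hi).2 ((h.low i hi).trans hb)

theorem between (h : Bv ν b) {i j : ℕ} (hi : i ≤ ν.length) (hij : i < j)
    (hj : j ≤ fpos ν (b i)) : b j ≤ b i := by
  have h1 := h.fix (b i) (h.up i hi)
  rcases Nat.lt_or_ge j (fpos ν (b i)) with h2 | h2
  · have := h.av i j _ hij h2 (fpos_spec ν (h.up i hi)).1
    omega
  · rw [show j = fpos ν (b i) by omega, h1]

end Bv

/-- Bracket vectors are determined by their content. -/
theorem Bv_unique {ν : List Bool} {b b' : ℕ → ℕ} (h : Bv ν b) (h' : Bv ν b')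
    (hc : ∀ k ≤ northSteps ν, Cx ν.length b (k + 1) = Cx ν.length b' (k + 1)) :
    ∀ i ≤ ν.length, b i = b' i := by
  -- one-sided step
  have step : ∀ (b b' : ℕ → ℕ), Bv ν b → Bv ν b' → ∀ k ≤ northSteps ν,
      Cx ν.length b (k + 1) = Cx ν.length b' (k + 1) →
      (∀ i ≤ ν.length, b i < k ↔ b' i < k) → ∀ i ≤ ν.length, b i < k + 1 → b' i < k + 1 := by
    intro b b' h h' k hk hc ih i hi hb
    by_contra hb'
    have hbi : b i = k := by
      have := ih i hi
      omega
    have hif : i ≤ fpos ν k := h.le_f' hi hk (by omega)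
    unfold Cx at hc
    have hss : (Finset.range (ν.length + 1)).filter (fun i => b' i < k + 1) ⊂
        (Finset.range (ν.length + 1)).filter (fun i => b i < k + 1) := by
      rw [Finset.ssubset_iff_of_subset]
      · exact ⟨i, by simp; omega, by simp; omega⟩
      · intro j hj
        simp only [Finset.mem_filter, Finset.mem_range] at hj ⊢
        obtain ⟨hj1, hj2⟩ := hj
        refine ⟨hj1, ?_⟩
        have hjl : j ≤ ν.length := by omega
        by_cases hlt : b' j < k
        · have := (ih j hjl).2 hlt
          omega
        · have hbj : b' j = k := by omega
          have hjf : j ≤ fpos ν k := h'.le_f' hjl hk (by omega)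
          rcases Nat.lt_trichotomy j i with hji | hji | hji
          · have := h'.between hjl hji (by rw [hbj]; exact hif)
            omega
          · subst hji; omega
          · have := h.between hi hji (by rw [hbi]; exact hjf)
            omega
    have := Finset.card_lt_card hss
    omega
  have main : ∀ k ≤ northSteps ν + 1, ∀ i ≤ ν.length, b i < k ↔ b' i < k := by
    intro k
    induction k with
    | zero => intro _ i _; simp
    | succ k ih =>
      intro hk i hi
      have ih := ih (by omega)
      exact ⟨step b b' h h' k (by omega) (hc k (by omega)) ih i hi,
        step b' b h' h k (by omega) (hc k (by omega)).symm (fun i hi => (ih i hi).symm) i hi⟩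
  intro i hi
  have h1 := h.up i hi
  have h2 := h'.up i hi
  have a := (main (b i + 1) (by omega) i hi).1 (by omega)
  have c := (main (b' i + 1) (by omega) i hi).2 (by omega)
  omega

/-- positions left of `f_j` with larger value. -/
noncomputable def Hset (ν : List Bool) (b : ℕ → ℕ) (j : ℕ) : Finset ℕ :=
  (Finset.range (ν.length + 1)).filter (fun i => i ≤ fpos ν j ∧ j < b i)

theorem mem_Hset {ν : List Bool} {b : ℕ → ℕ} {j i : ℕ} (hj : j ≤ northSteps ν) :
    i ∈ Hset ν b j ↔ i ≤ fpos ν j ∧ j < b i := by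
  have := (fpos_spec ν hj).1
  simp only [Hset, Finset.mem_filter, Finset.mem_range]
  constructor
  · exact fun h => h.2
  · exact fun h => ⟨by omega, h⟩

theorem H_add {ν : List Bool} {b : ℕ → ℕ} (h : Bv ν b) {j : ℕ} (hj : j ≤ northSteps ν) :
    (Hset ν b j).card + Cx ν.length b (j + 1) = fpos ν j + 1 := by
  unfold Cx
  have hf := (fpos_spec ν hj).1
  rw [← Finset.card_union_of_disjoint]
  · rw [← Finset.card_range (fpos ν j + 1)]
    congr 1
    ext i
    simp only [Finset.mem_union, mem_Hset hj, Finset.mem_filter, Finset.mem_range]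
    constructor
    · rintro (h1 | h1)
      · omega
      · have := h.le_f' (show i ≤ ν.length by omega) hj (by omega)
        omega
    · intro h1
      by_cases h2 : j < b i
      · left; omega
      · right; omega
  · rw [Finset.disjoint_left]
    intro i h1 h2
    simp only [mem_Hset hj, Finset.mem_filter] at h1 h2
    omega

/-- `s` is the first occurrence of the value `k`, not the last one. -/
structure First (ν : List Bool) (b : ℕ → ℕ) (k s : ℕ) : Prop where
  kn : k < northSteps ν
  val : b s = k
  lt : s < fpos ν k
  first : ∀ i < s, b i ≠ k

section rot
variable {ν : List Bool} {b : ℕ → ℕ} {k s : ℕ}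

theorem First.le (hs : First ν b k s) : s ≤ ν.length := by
  have := (fpos_spec ν (le_of_lt hs.kn)).1
  have := hs.lt
  omega

theorem H_k_lt (h : Bv ν b) (hs : First ν b k s) {i : ℕ} (hi : i ∈ Hset ν b k) : i < s := by
  rw [mem_Hset (le_of_lt hs.kn)] at hi
  by_contra hc
  have hv := hs.val
  rcases Nat.lt_or_ge s i with h1 | h1
  · have := h.between hs.le h1 (by rw [hs.val]; exact hi.1)
    omega
  · have : i = s := by omega
    subst this; omega

/-- no value strictly between occurs to the left, when all intermediate `H` are large. -/
theorem condA (h : Bv ν b) (hs : First ν b k s) {w : ℕ}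
    (hH : (Hset ν b k).card < (Hset ν b w).card) (hkw : k < w) {i : ℕ} (hi : i < s) :
    b i ≠ w := by
  intro hw
  have hsl := hs.le
  have hwn : w ≤ northSteps ν := by rw [← hw]; exact h.up i (by omega)
  have hlt := fpos_lt ν hkw hwn
  have hlt2 := hs.lt
  have : Hset ν b w ⊆ Hset ν b k := by
    intro j hj
    rw [mem_Hset hwn] at hj
    rw [mem_Hset (by omega)]
    refine ⟨?_, by omega⟩
    by_contra hc
    have := h.between (show i ≤ ν.length by omega) (show i < j by omega) (by rw [hw]; exact hj.1)
    omega
  have := Finset.card_le_card this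
  omega

/-- everything between `s` and `f_v` is at most `v`. -/
theorem condB (h : Bv ν b) (hs : First ν b k s) {v : ℕ} (hkv : k < v) (hvn : v ≤ northSteps ν)
    (hlt : ∀ j, k < j → j < v → (Hset ν b k).card < (Hset ν b j).card)
    (hv : (Hset ν b v).card ≤ (Hset ν b k).card) {j : ℕ} (hsj : s ≤ j) (hj : j ≤ fpos ν v) :
    b j ≤ v := by
  by_contra hc
  have hsl := hs.le
  have hf := fpos_lt ν hkv hvn
  have hf2 := hs.lt
  by_cases hex : ∃ i < s, b i = v
  · obtain ⟨i, hi, hiv⟩ := hex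
    have := h.between (show i ≤ ν.length by omega) (show i < j by omega) (by rw [hiv]; exact hj)
    omega
  · push Not at hex
    have hss : Hset ν b k ⊂ Hset ν b v := by
      rw [Finset.ssubset_iff_of_subset]
      · refine ⟨j, (mem_Hset hvn).2 ⟨hj, by omega⟩, fun hjk => ?_⟩
        have := H_k_lt h hs hjk
        omega
      · intro i hi
        have his := H_k_lt h hs hi
        rw [mem_Hset (by omega)] at hi
        rw [mem_Hset hvn]
        refine ⟨by omega, ?_⟩
        by_contra hbi
        rcases Nat.lt_or_ge (b i) v with h1 | h1
        · exact condA h hs (hlt (b i) hi.2 h1) hi.2 his rfl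
        · exact hex i his (by omega)
    have := Finset.card_lt_card hss
    omega

/-- if `v` is below the rotation value then something larger lies between. -/
theorem notB (h : Bv ν b) (hs : First ν b k s) {v : ℕ} (hkv : k < v) (hvn : v ≤ northSteps ν)
    (hlt : ∀ j, k < j → j ≤ v → (Hset ν b k).card < (Hset ν b j).card) :
    ∃ j, s < j ∧ j < fpos ν v ∧ v < b j := by
  have hsl := hs.le
  by_contra hc
  push Not at hc
  have : Hset ν b v ⊆ Hset ν b k := by
    intro i hi
    rw [mem_Hset hvn] at hi
    rw [mem_Hset (by omega)]
    have h1 : i ≠ fpos ν v := by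
      intro e; rw [e, h.fix v hvn] at hi; omega
    have h2 : i ≠ s := by
      intro e; rw [e, hs.val] at hi; omega
    have h3 := hs.lt
    have : i < s := by
      by_contra h4
      have := hc i (by omega) (by omega)
      omega
    omega
  have := Finset.card_le_card this
  have := hlt v hkv le_rfl
  omega

theorem Bv_update (h : Bv ν b) (hs : First ν b k s) {v : ℕ} (hkv : k < v)
    (hvn : v ≤ northSteps ν)
    (hlt : ∀ j, k < j → j < v → (Hset ν b k).card < (Hset ν b j).card)
    (hv : (Hset ν b v).card ≤ (Hset ν b k).card) : Bv ν (Function.update b s v) := by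
  have hsl := hs.le
  have hsv := hs.val
  have hf := fpos_lt ν hkv hvn
  have hf2 := hs.lt
  have hfv := (fpos_spec ν hvn).1
  have hne : ∀ i, i ≠ s → Function.update b s v i = b i := fun i hi => Function.update_of_ne hi _ _
  have heq : Function.update b s v s = v := Function.update_self _ _ _
  refine ⟨?_, ?_, ?_, ?_⟩
  · intro j hj
    have : fpos ν j ≠ s := by
      intro e
      have := h.fix j hj
      rw [e, hsv] at this
      subst this; omega
    rw [hne _ this, h.fix j hj]
  · intro i hi
    have := h.low i hi
    by_cases e : i = s
    · subst e; rw [heq]; omega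
    · rw [hne _ e]; exact this
  · intro i hi
    by_cases e : i = s
    · subst e; rw [heq]; omega
    · rw [hne _ e]; exact h.up i hi
  · rintro p q r hpq hqr hr ⟨e1, e2⟩
    by_cases ep : p = s
    · subst ep
      rw [heq, hne q (by omega)] at e2
      rw [heq, hne r (by omega)] at e1
      have h1 := h.le_f hr
      rw [← e1] at h1
      have := condB h hs hkv hvn hlt hv (show p ≤ q by omega) (by omega)
      omega
    · rw [hne p ep] at e1 e2
      by_cases eq : q = s
      · subst eq
        rw [heq] at e2
        rw [hne r (by omega)] at e1
        -- p < s < r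
        rcases Nat.lt_trichotomy (b p) k with h1 | h1 | h1
        · exact h.av p q r hpq hqr hr ⟨e1, by omega⟩
        · exact hs.first p hpq h1
        · exact condA h hs (hlt (b p) h1 e2) h1 hpq rfl
      · rw [hne q eq] at e2
        by_cases er : r = s
        · subst er
          rw [heq] at e1
          have := h.between (show p ≤ ν.length by omega) hpq (by rw [e1]; omega)
          omega
        · rw [hne r er] at e1
          exact h.av p q r hpq hqr hr ⟨e1, e2⟩

/-- content of the updated vector. -/
theorem Cx_update (hs : First ν b k s) {v : ℕ} (hkv : k < v) (j : ℕ) :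
    Cx ν.length (Function.update b s v) j + (if k < j ∧ j ≤ v then 1 else 0) =
      Cx ν.length b j := by
  have hsl := hs.le
  have hsv := hs.val
  have hne : ∀ i, i ≠ s → Function.update b s v i = b i := fun i hi => Function.update_of_ne hi _ _
  have heq : Function.update b s v s = v := Function.update_self _ _ _
  unfold Cx
  split_ifs with hj
  · rw [← Finset.card_erase_add_one (s := (Finset.range (ν.length + 1)).filter (fun i => b i < j))
      (a := s) (by simp; omega)]
    congr 2
    ext i
    simp only [Finset.mem_filter, Finset.mem_range, Finset.mem_erase]
    by_cases e : i = s
    · subst e; rw [heq]; omega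
    · rw [hne _ e]; tauto
  · rw [add_zero]
    congr 1
    ext i
    simp only [Finset.mem_filter, Finset.mem_range]
    by_cases e : i = s
    · subst e; rw [heq]; omega
    · rw [hne _ e]

/-- upward step below a given larger bracket vector. -/
theorem exists_step {D : ℕ → ℕ} (h : Bv ν b) (hD : Bv ν D)
    (hle : ∀ i ≤ ν.length, b i ≤ D i) (hne : ∃ i ≤ ν.length, b i ≠ D i) :
    ∃ k s v, First ν b k s ∧ k < v ∧ v ≤ northSteps ν ∧
      (∀ j, k < j → j < v → (Hset ν b k).card < (Hset ν b j).card) ∧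
      (Hset ν b v).card ≤ (Hset ν b k).card ∧ v ≤ D s := by
  obtain ⟨t, ht, hbt⟩ := hne
  have hlt : b t < D t := lt_of_le_of_ne (hle t ht) hbt
  have hDt := hD.up t ht
  set k := b t with hk
  have hkn : k < northSteps ν := by omega
  have hex : ∃ s, b s = k := ⟨t, rfl⟩
  set s := Nat.find hex with hsdef
  have hs1 : b s = k := Nat.find_spec hex
  have hst : s ≤ t := Nat.find_min' hex rfl
  have hsl : s ≤ ν.length := by omega
  have htf : t ≤ fpos ν k := h.le_f ht
  have htne : t ≠ fpos ν k := by
    intro e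
    have := hD.fix k (by omega)
    rw [← e] at this; omega
  have hs : First ν b k s :=
    ⟨hkn, hs1, by omega, fun i hi => Nat.find_min hex hi⟩
  have hDs : k < D s := by
    have h1 := hle s hsl
    rcases Nat.lt_or_ge k (D s) with h2 | h2
    · exact h2
    · have h3 : D s = k := by omega
      rcases Nat.lt_or_ge s t with h4 | h4
      · have := hD.between hsl h4 (by rw [h3]; exact htf)
        omega
      · rw [show s = t by omega] at h3; omega
  have hexv : ∃ v, k < v ∧ v ≤ northSteps ν ∧ (Hset ν b v).card ≤ (Hset ν b k).card := by
    refine ⟨northSteps ν, hkn, le_rfl, ?_⟩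
    have : Hset ν b (northSteps ν) = ∅ := by
      ext i
      rw [mem_Hset le_rfl, fpos_last]
      simp only [Finset.notMem_empty, iff_false, not_and, not_lt]
      exact fun hi => h.up i hi
    rw [this]; simp
  set v := Nat.find hexv with hv
  obtain ⟨hv1, hv2, hv3⟩ : k < v ∧ v ≤ northSteps ν ∧ (Hset ν b v).card ≤ (Hset ν b k).card :=
    Nat.find_spec hexv
  have hmin : ∀ j, k < j → j < v → (Hset ν b k).card < (Hset ν b j).card := by
    intro j h1 h2
    have := Nat.find_min hexv h2
    by_contra hc
    exact this ⟨h1, by omega, by omega⟩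
  refine ⟨k, s, v, hs, hv1, hv2, hmin, hv3, ?_⟩
  by_contra hc
  obtain ⟨j, hj1, hj2, hj3⟩ := notB h hs hDs (hD.up s hsl) (fun j h1 h2 => hmin j h1 (by omega))
  have h5 := (fpos_spec ν (hD.up s hsl)).1
  have := hD.between hsl hj1 (by omega)
  have := hle j (by omega)
  omega

end rot

/-! The greedy assignment -/

theorem points_add (μ : List Bool) (k : ℕ) :
    Cx μ.length (hgt μ) (k + 1) = Cx μ.length (hgt μ) k + pointsAtHeight μ k := by
  have h1 : pointsAtHeight μ k =
      ((Finset.range (μ.length + 1)).filter (fun i => hgt μ i = k)).card := by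
    unfold pointsAtHeight hgt
    rw [← List.toFinset_card_of_nodup (List.nodup_range.filter _)]
    congr 1
    ext i
    simp
  rw [h1]
  unfold Cx
  rw [← Finset.card_union_of_disjoint]
  · congr 1
    ext i
    simp only [Finset.mem_union, Finset.mem_filter, Finset.mem_range]
    omega
  · rw [Finset.disjoint_left]
    intro i h1 h2
    simp only [Finset.mem_filter] at h1 h2
    omega

theorem lookup_map_const (l : List ℕ) (k i : ℕ) :
    (l.map fun i => (i, k)).lookup i = if i ∈ l then some k else none := by
  induction l with
  | nil => simp
  | cons a t ih =>
    simp only [List.map_cons, List.lookup_cons, ih, List.mem_cons]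
    by_cases h : i = a
    · subst h; simp
    · have hb : (i == a) = false := by simp [h]
      rw [hb]; simp [h]

theorem take_reverse_spec (L : List ℕ) (hL : L.Pairwise (· < ·)) (c : ℕ) (hc : c ≤ L.length) :
    (L.reverse.take c).Nodup ∧ (L.reverse.take c).length = c ∧
    (∀ i ∈ L.reverse.take c, i ∈ L) ∧
    ∀ i ∈ L.reverse.take c, ∀ j ∈ L, i < j → j ∈ L.reverse.take c := by
  have hnd : L.reverse.Nodup := by
    rw [List.nodup_reverse]; exact hL.imp (fun h => ne_of_lt h)
  refine ⟨hnd.sublist (List.take_sublist _ _), by simp [hc],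
    fun i hi => by simpa using List.mem_of_mem_take hi, ?_⟩
  intro i hi j hj hij
  have hj' : j ∈ L.reverse.take c ++ L.reverse.drop c := by
    rw [List.take_append_drop]; simpa using hj
  rcases List.mem_append.1 hj' with h | h
  · exact h
  · exfalso
    have hp : (L.reverse.take c ++ L.reverse.drop c).Pairwise (fun a b => b < a) := by
      rw [List.take_append_drop, List.pairwise_reverse]; exact hL
    have := (List.pairwise_append.1 hp).2.2 i hi j h
    omega

/-- one step of the assignment. -/
noncomputable def stepFn (ν μ : List Bool) (st : List (ℕ × ℕ) × List ℕ) (k : ℕ) :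
    List (ℕ × ℕ) × List ℕ :=
  let picked := ((st.2.filter fun i => decide (i ≤ fpos ν k)).reverse).take
    (pointsAtHeight μ k)
  (st.1 ++ picked.map fun i => (i, k), st.2.filter fun i => decide (i ∉ picked))

noncomputable def stateAt (ν μ : List Bool) (K : ℕ) : List (ℕ × ℕ) × List ℕ :=
  (List.range K).foldl (stepFn ν μ) ([], List.range (ν.length + 1))

theorem stateAt_succ (ν μ : List Bool) (K : ℕ) :
    stateAt ν μ (K + 1) = stepFn ν μ (stateAt ν μ K) K := by
  unfold stateAt
  rw [List.range_succ (n := K), List.foldl_append]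
  rfl

theorem bracketAssign_eq (ν μ : List Bool) :
    bracketAssign ν μ = (stateAt ν μ (northSteps ν + 1)).1 := rfl

structure Inv (ν μ : List Bool) (K : ℕ) (st : List (ℕ × ℕ) × List ℕ) : Prop where
  sorted : st.2.Pairwise (· < ·)
  mem : ∀ i, i ∈ st.2 ↔ i ≤ ν.length ∧ st.1.lookup i = none
  bd : ∀ i k, st.1.lookup i = some k → i ≤ ν.length ∧ k < K ∧ i ≤ fpos ν k
  right : ∀ i i' k, st.1.lookup i = some k → i < i' → i' ≤ fpos ν k →
    ∃ k' ≤ k, st.1.lookup i' = some k'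
  fix : ∀ k < K, st.1.lookup (fpos ν k) = some k
  cnt : ∀ k ≤ K, ((Finset.range (ν.length + 1)).filter
    (fun i => ∃ k' < k, st.1.lookup i = some k')).card = Cx ν.length (hgt μ) k

theorem inv_zero (ν μ : List Bool) : Inv ν μ 0 (stateAt ν μ 0) := by
  constructor
  · simpa [stateAt] using List.pairwise_lt_range
  · intro i; simp [stateAt]
  · intro i k h; simp [stateAt] at h
  · intro i i' k h; simp [stateAt] at h
  · intro k h; omega
  · intro k h
    have : k = 0 := by omega
    subst this
    simp [Cx]

theorem Cx_path_lt (μ : List Bool) {k : ℕ} (hk : k ≤ northSteps μ) :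
    Cx μ.length (hgt μ) k < Cx μ.length (hgt μ) (k + 1) := by
  obtain ⟨j, hj, e⟩ := hgt_surj μ μ.length k (by rw [hgt_of_le μ le_rfl]; exact hk)
  have h1 := (hgt_lt_iff μ μ.length hj (k + 1)).1 (by omega)
  have h2 := (hgt_lt_iff μ μ.length hj k)
  omega

theorem Cx_path_le {ν μ : List Bool} (h : IsNuPath ν μ) {k : ℕ} (hk : k ≤ northSteps ν) :
    Cx ν.length (hgt μ) (k + 1) ≤ fpos ν k + 1 := by
  obtain ⟨h1, h2, h3⟩ := (nuPath_iff ν μ).1 h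
  by_contra hc
  have hf := fpos_spec ν hk
  have hle : Cx ν.length (hgt μ) (k + 1) ≤ ν.length + 1 := by
    unfold Cx
    exact (Finset.card_filter_le _ _).trans (by simp)
  have h4 := (hgt_lt_iff μ ν.length (show fpos ν k + 1 ≤ ν.length by omega) (k + 1)).2 (by omega)
  have h5 := h3 (fpos ν k + 1) (by omega)
  rcases Nat.lt_or_ge (hgt μ (fpos ν k + 1)) k with h6 | h6
  · have := fpos_lt ν h6 hk
    omega
  · rw [show hgt μ (fpos ν k + 1) = k by omega] at h5
    omega

theorem inv_step {ν μ : List Bool} (h : IsNuPath ν μ) {K : ℕ} (hK : K ≤ northSteps ν)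
    {st : List (ℕ × ℕ) × List ℕ} (I : Inv ν μ K st) : Inv ν μ (K + 1) (stepFn ν μ st K) := by
  obtain ⟨hl, hn, _⟩ := (nuPath_iff ν μ).1 h
  have hf := fpos_spec ν hK
  have hpts := points_add μ K
  rw [hl] at hpts
  have hpos := Cx_path_lt μ (show K ≤ northSteps μ by omega)
  rw [hl] at hpos
  have hbound := Cx_path_le h hK
  set U := st.2.filter fun i => decide (i ≤ fpos ν K) with hU
  have hUsorted : U.Pairwise (· < ·) := I.sorted.sublist List.filter_sublist
  have hUmem : ∀ i, i ∈ U ↔ i ≤ fpos ν K ∧ st.1.lookup i = none := by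
    intro i
    rw [hU, List.mem_filter, I.mem]
    simp only [decide_eq_true_eq]
    constructor
    · rintro ⟨⟨_, h2⟩, h3⟩; exact ⟨h3, h2⟩
    · rintro ⟨h2, h3⟩; exact ⟨⟨by omega, h3⟩, h2⟩
  have hfle : ∀ k < K, fpos ν k < fpos ν K := fun k hk => fpos_lt ν hk hK
  have hUlen : U.length + Cx ν.length (hgt μ) K = fpos ν K + 1 := by
    rw [← List.toFinset_card_of_nodup (hUsorted.imp (fun h => ne_of_lt h)), ← I.cnt K le_rfl,
      ← Finset.card_union_of_disjoint, ← Finset.card_range (fpos ν K + 1)]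
    · congr 1
      ext i
      simp only [Finset.mem_union, List.mem_toFinset, hUmem, Finset.mem_filter, Finset.mem_range]
      constructor
      · rintro (h1 | ⟨h1, k', hk', h2⟩)
        · omega
        · have := (I.bd i k' h2).2.2
          have := hfle k' hk'
          omega
      · intro hi
        cases hv : st.1.lookup i with
        | none => left; exact ⟨by omega, rfl⟩
        | some k' => right; exact ⟨by omega, k', (I.bd i k' hv).2.1, rfl⟩
    · rw [Finset.disjoint_left]
      intro i h1 h2
      simp only [List.mem_toFinset, hUmem, Finset.mem_filter] at h1 h2
      obtain ⟨_, k', _, h3⟩ := h2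
      rw [h1.2] at h3; cases h3
  obtain ⟨p1, p2, p3, p4⟩ := take_reverse_spec U hUsorted (pointsAtHeight μ K) (by omega)
  have hst : stepFn ν μ st K = (st.1 ++ (U.reverse.take (pointsAtHeight μ K)).map fun i => (i, K),
      st.2.filter fun i => decide (i ∉ U.reverse.take (pointsAtHeight μ K))) := rfl
  rw [hst]
  set P := U.reverse.take (pointsAtHeight μ K) with hP
  have hPnone : ∀ i ∈ P, i ≤ fpos ν K ∧ st.1.lookup i = none := fun i hi => (hUmem i).1 (p3 i hi)
  have hlook : ∀ i, (st.1 ++ P.map fun i => (i, K)).lookup i =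
      (st.1.lookup i).or (if i ∈ P then some K else none) := by
    intro i
    rw [List.lookup_append, lookup_map_const]
  have hlook2 : ∀ i k, (st.1 ++ P.map fun i => (i, K)).lookup i = some k ↔
      (st.1.lookup i = some k ∨ (i ∈ P ∧ k = K)) := by
    intro i k
    rw [hlook]
    by_cases hi : i ∈ P
    · simp [hi, (hPnone i hi).2, eq_comm]
    · simp [hi]
  have hKf : fpos ν K ∈ P := by
    have : 0 < P.length := by omega
    obtain ⟨x, hx⟩ := List.exists_mem_of_length_pos this
    have hxle := (hPnone x hx).1
    rcases Nat.lt_or_ge x (fpos ν K) with hlt | hge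
    · refine p4 x hx _ ((hUmem _).2 ⟨le_rfl, ?_⟩) hlt
      cases hv : st.1.lookup (fpos ν K) with
      | none => rfl
      | some k' =>
        have := I.bd _ _ hv
        have := hfle k' this.2.1
        omega
    · rwa [show fpos ν K = x by omega]
  constructor
  · exact I.sorted.sublist List.filter_sublist
  · intro i
    simp only [List.mem_filter, I.mem, hlook]
    by_cases hi : i ∈ P <;> simp [hi]
  · intro i k hk
    rcases (hlook2 i k).1 hk with h1 | ⟨h1, rfl⟩
    · have := I.bd i k h1
      omega
    · have := hPnone i h1
      omega
  · intro i i' k hk hii hi'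
    simp only [hlook2]
    rcases (hlook2 i k).1 hk with h1 | ⟨h1, rfl⟩
    · obtain ⟨k', a, c⟩ := I.right i i' k h1 hii hi'
      exact ⟨k', a, Or.inl c⟩
    · cases hv : st.1.lookup i' with
      | some k' =>
        exact ⟨k', by have := I.bd i' k' hv; omega, Or.inl rfl⟩
      | none =>
        exact ⟨k, le_rfl, Or.inr ⟨p4 i h1 i' ((hUmem i').2 ⟨hi', hv⟩) hii, rfl⟩⟩
  · intro k hk
    rw [hlook2]
    rcases Nat.lt_or_ge k K with h1 | h1
    · left; exact I.fix k h1
    · right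
      have : k = K := by omega
      subst this; exact ⟨hKf, rfl⟩
  · intro k hk
    simp only [hlook2]
    rcases Nat.lt_or_ge k (K + 1) with h1 | h1
    · rw [← I.cnt k (by omega)]
      congr 1
      ext i
      simp only [Finset.mem_filter, Finset.mem_range]
      refine and_congr_right fun _ => exists_congr fun k' => and_congr_right fun hk' => ?_
      constructor
      · rintro (h2 | ⟨_, h2⟩)
        · exact h2
        · omega
      · exact Or.inl
    · have hkK : k = K + 1 := by omega
      subst hkK
      rw [hpts, ← I.cnt K le_rfl, ← p2, ← List.toFinset_card_of_nodup p1,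
        ← Finset.card_union_of_disjoint]
      · congr 1
        ext i
        simp only [Finset.mem_union, List.mem_toFinset, Finset.mem_filter, Finset.mem_range]
        constructor
        · rintro ⟨h2, k', h3, h4 | ⟨h4, h5⟩⟩
          · exact Or.inl ⟨h2, k', (I.bd i k' h4).2.1, h4⟩
          · exact Or.inr h4
        · rintro (⟨h2, k', h3, h4⟩ | h2)
          · exact ⟨h2, k', by omega, Or.inl h4⟩
          · have := (hPnone i h2).1
            exact ⟨by omega, K, by omega, Or.inr ⟨h2, rfl⟩⟩
      · rw [Finset.disjoint_left]
        intro i h2 h3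
        simp only [List.mem_toFinset, Finset.mem_filter] at h2 h3
        obtain ⟨_, k', _, h5⟩ := h2
        rw [(hPnone i h3).2] at h5; cases h5

theorem inv_all {ν μ : List Bool} (h : IsNuPath ν μ) (K : ℕ) (hK : K ≤ northSteps ν + 1) :
    Inv ν μ K (stateAt ν μ K) := by
  induction K with
  | zero => exact inv_zero ν μ
  | succ K ih =>
    rw [stateAt_succ]
    exact inv_step h (by omega) (ih (by omega))

/-- The bracket vector as a function. -/
noncomputable def bf (ν μ : List Bool) (i : ℕ) : ℕ := (bracketOfPath ν μ).getD i 0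

theorem length_bracket (ν μ : List Bool) : (bracketOfPath ν μ).length = ν.length + 1 := by
  simp [bracketOfPath]

theorem Cx_all {ν μ : List Bool} (h : IsNuPath ν μ) :
    Cx ν.length (hgt μ) (northSteps ν + 1) = ν.length + 1 := by
  obtain ⟨hl, hn, _⟩ := (nuPath_iff ν μ).1 h
  unfold Cx
  rw [Finset.filter_true_of_mem, Finset.card_range]
  intro i _
  have := hgt_le_north μ i
  omega

theorem bf_spec {ν μ : List Bool} (h : IsNuPath ν μ) :
    Bv ν (bf ν μ) ∧ ∀ k ≤ northSteps ν + 1, Cx ν.length (bf ν μ) k = Cx ν.length (hgt μ) k := by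
  have I := inv_all h _ le_rfl
  rw [← Prod.mk.eta (p := stateAt ν μ (northSteps ν + 1)), ← bracketAssign_eq] at I
  have hall : ∀ i ≤ ν.length, ∃ k' < northSteps ν + 1, (bracketAssign ν μ).lookup i = some k' := by
    have h1 := I.cnt _ le_rfl
    rw [Cx_all h] at h1
    have h2 := Finset.eq_of_subset_of_card_le (Finset.filter_subset
      (fun i => ∃ k' < northSteps ν + 1, (bracketAssign ν μ).lookup i = some k')
      (Finset.range (ν.length + 1))) (by simp only [Finset.card_range]; simp only at h1; omega)
    intro i hi
    have : i ∈ Finset.range (ν.length + 1) := by simp; omega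
    rw [← h2] at this
    exact (Finset.mem_filter.1 this).2
  have hb : ∀ i ≤ ν.length, (bracketAssign ν μ).lookup i = some (bf ν μ i) := by
    intro i hi
    obtain ⟨k, _, hk⟩ := hall i hi
    unfold bf bracketOfPath
    rw [List.getD_eq_getElem _ _ (by simp; omega)]
    simp [hk]
  refine ⟨⟨?_, ?_, ?_, ?_⟩, ?_⟩
  · intro k hk
    have h1 := I.fix k (by omega)
    have h2 := hb _ (fpos_spec ν hk).1
    rw [h1] at h2
    exact (Option.some.inj h2).symm
  · intro i hi
    have h1 := I.bd i _ (hb i hi)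
    exact (le_fpos_iff ν (by omega) hi).1 h1.2.2
  · intro i hi
    have h1 := I.bd i _ (hb i hi)
    omega
  · rintro i j k hij hjk hk ⟨e1, e2⟩
    have h1 := I.bd k _ (hb k hk)
    obtain ⟨k', h2, h3⟩ := I.right i j _ (hb i (by omega)) hij (by rw [e1]; omega)
    have h4 := hb j (by omega)
    simp only at h3
    rw [h3] at h4
    have := Option.some.inj h4
    omega
  · intro k hk
    rw [← I.cnt k hk]
    unfold Cx
    congr 1
    ext i
    simp only [Finset.mem_filter, Finset.mem_range]
    refine and_congr_right fun hi => ?_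
    rw [hb i (by omega)]
    simp

/-! Covering relations -/

theorem getD_true_iff (μ : List Bool) {i : ℕ} (hi : i < μ.length) (d : Bool) :
    μ.getD i d = true ↔ hgt μ (i + 1) = hgt μ i + 1 := by
  rw [hgt_succ, List.getD_eq_getElem _ _ hi, List.getD_eq_getElem _ _ hi]
  cases μ[i] <;> simp

def rotPath (μ : List Bool) (i j : ℕ) : List Bool :=
  μ.take (i - 1) ++ (μ.drop i).take (j - i) ++ [false] ++ μ.drop j

theorem rot_spec (μ : List Bool) {i j : ℕ} (hi : 0 < i) (hij : i < j) (hj : j ≤ μ.length)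
    (he : hgt μ i = hgt μ (i - 1)) :
    (rotPath μ i j).length = μ.length ∧
    ∀ t, hgt (rotPath μ i j) t = if t < i - 1 ∨ j ≤ t then hgt μ t else hgt μ (t + 1) := by
  obtain ⟨a, rfl⟩ : ∃ a, i = a + 1 := ⟨i - 1, by omega⟩
  simp only [Nat.add_sub_cancel] at he ⊢
  have hel : μ[a]'(by omega) = false := by
    have := getD_true_iff μ (show a < μ.length by omega) false
    rw [List.getD_eq_getElem _ _ (by omega)] at this
    by_contra hc
    have := this.1 (by simpa using hc)
    omega
  obtain ⟨A, hA⟩ : ∃ A, A = μ.take a := ⟨_, rfl⟩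
  obtain ⟨B, hB⟩ : ∃ B, B = (μ.drop (a + 1)).take (j - (a + 1)) := ⟨_, rfl⟩
  obtain ⟨D, hD⟩ : ∃ D, D = μ.drop j := ⟨_, rfl⟩
  have lA : A.length = a := by rw [hA]; simp; omega
  have lB : B.length = j - (a + 1) := by rw [hB]; simp; omega
  have lD : D.length = μ.length - j := by rw [hD]; simp
  have hμ : μ = A ++ ([false] ++ (B ++ D)) := by
    have h1 : μ.drop (a + 1) = B ++ D := by
      rw [hB, hD]
      conv_lhs => rw [← List.take_append_drop (j - (a + 1)) (μ.drop (a + 1))]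
      rw [List.drop_drop, show a + 1 + (j - (a + 1)) = j by omega]
    rw [← h1, hA, ← hel]
    simp
  have hr : rotPath μ (a + 1) j = A ++ (B ++ ([false] ++ D)) := by
    unfold rotPath
    rw [hA, hB, hD]
    simp
  have hf : ∀ t, hgt [false] t = 0 := by
    intro t
    have := hgt_le_north [false] t
    simpa [northSteps] using this
  constructor
  · rw [hr]; simp [lA, lB, lD]; omega
  · intro t
    have e1 : ∀ t, hgt μ t = hgt A t + (hgt B (t - a - 1) + hgt D (t - a - 1 - (j - (a + 1)))) := by
      intro t
      rw [hμ, hgt_append, hgt_append, hgt_append, hf, lA, lB]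
      simp
    rw [hr, hgt_append, hgt_append, hgt_append, hf, lA, lB]
    simp only [List.length_singleton]
    split_ifs with h
    · rw [e1]
      rcases h with h | h
      · rw [show t - a = 0 by omega]
        simp [hgt_zero]
      · rw [hgt_of_le B (by omega), hgt_of_le B (by omega),
          show t - a - (j - (a + 1)) - 1 = t - a - 1 - (j - (a + 1)) by omega]
        omega
    · rw [e1, hgt_of_le A (by omega), hgt_of_le A (by omega),
        show t - a - (j - (a + 1)) - 1 = 0 by omega,
        show t + 1 - a - 1 - (j - (a + 1)) = 0 by omega, show t + 1 - a - 1 = t - a by omega]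
      omega

theorem Cx_le (ℓ : ℕ) (g : ℕ → ℕ) (k : ℕ) : Cx ℓ g k ≤ ℓ + 1 := by
  unfold Cx
  exact (Finset.card_filter_le _ _).trans (by simp)

theorem eq_of_initial {ℓ c c' : ℕ} (h1 : c ≤ ℓ + 1) (h2 : c' ≤ ℓ + 1)
    (h : ∀ t ≤ ℓ, t < c ↔ t < c') : c = c' := by
  rcases Nat.lt_trichotomy c c' with h3 | h3 | h3
  · have := h c (by omega); omega
  · exact h3
  · have := h c' (by omega); omega

theorem rot_Cx (μ : List Bool) {i j : ℕ} (hi : 0 < i) (hij : i < j) (hj : j ≤ μ.length)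
    (he : hgt μ i = hgt μ (i - 1)) (l : ℕ) :
    Cx μ.length (hgt (rotPath μ i j)) l + (if hgt μ i < l ∧ l ≤ hgt μ j then 1 else 0) =
      Cx μ.length (hgt μ) l := by
  obtain ⟨hlen, hh⟩ := rot_spec μ hi hij hj he
  have c1 := Cx_le μ.length (hgt (rotPath μ i j)) l
  have c2 := Cx_le μ.length (hgt μ) l
  have k1 : ∀ t ≤ μ.length, _ := fun t ht => hgt_lt_iff (rotPath μ i j) μ.length ht l
  have k2 : ∀ t ≤ μ.length, _ := fun t ht => hgt_lt_iff μ μ.length ht l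
  have ki := k2 i (by omega)
  have ki' := k2 (i - 1) (by omega)
  have kj := k2 j (by omega)
  have hm := hgt_mono μ (show i ≤ j by omega)
  suffices hs : Cx μ.length (hgt (rotPath μ i j)) l =
      Cx μ.length (hgt μ) l - (if hgt μ i < l ∧ l ≤ hgt μ j then 1 else 0) by
    rw [hs]; split_ifs <;> omega
  apply eq_of_initial (ℓ := μ.length) c1 (by omega)
  intro t ht
  rw [← k1 t ht, hh t]
  have kt := k2 t ht
  by_cases hc : t < i - 1 ∨ j ≤ t
  · rw [if_pos hc]
    rcases hc with hc | hc
    · have := hgt_mono μ (show t ≤ i by omega)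
      split_ifs <;> omega
    · have := hgt_mono μ hc
      split_ifs <;> omega
  · rw [if_neg hc]
    have kt' := k2 (t + 1) (by omega)
    have := hgt_mono μ (show i ≤ t + 1 by omega)
    have := hgt_mono μ (show t + 1 ≤ j by omega)
    split_ifs <;> omega

/-- numerical data of a cover. -/
structure RotData (ν : List Bool) (C : ℕ → ℕ) (k v : ℕ) : Prop where
  kv : k < v
  vn : v ≤ northSteps ν
  two : C k + 2 ≤ C (k + 1)
  gt : ∀ l, k < l → l < v → fpos ν k + 1 - C (k + 1) < fpos ν l + 1 - C (l + 1)
  le : fpos ν v + 1 - C (v + 1) ≤ fpos ν k + 1 - C (k + 1)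

theorem cover_forward {ν μ μ' : List Bool} (h : TamariCover ν μ μ') :
    ∃ k v, RotData ν (Cx ν.length (hgt μ)) k v ∧
      ∀ l, Cx ν.length (hgt μ') l + (if k < l ∧ l ≤ v then 1 else 0) = Cx ν.length (hgt μ) l := by
  obtain ⟨hμ, hμ', i, j, hi, hij, hj, he, hN, hH, hne, rfl⟩ := h
  obtain ⟨hl, hn, hp⟩ := (nuPath_iff ν μ).1 hμ
  rw [hl] at hj
  have he' : hgt μ i = hgt μ (i - 1) := by
    have h1 := getD_true_iff μ (show i - 1 < μ.length by omega) true
    rw [he, show i - 1 + 1 = i by omega] at h1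
    have h2 := hgt_succ_le μ (i - 1)
    have h3 := hgt_mono μ (show i - 1 ≤ i by omega)
    rw [show i - 1 + 1 = i by omega] at h2
    simp at h1
    omega
  have hN' : hgt μ (i + 1) = hgt μ i + 1 := (getD_true_iff μ (by omega) false).1 hN
  have hrot := fun l => rot_Cx μ hi hij (by omega) he' l
  rw [hl] at hrot
  refine ⟨hgt μ i, hgt μ j, ?_, fun l => hrot l⟩
  have hz : ∀ t ≤ ν.length, horiz ν (pointAt μ t) = fpos ν (hgt μ t) - t :=
    fun t ht => horiz_point ν μ hμ ht
  have L : ∀ t ≤ ν.length, ∀ k, _ := fun t ht k => hgt_lt_iff μ ν.length ht k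
  have hkv := hgt_mono μ (show i + 1 ≤ j by omega)
  have hjn : hgt μ j ≤ northSteps ν := by rw [← hn]; exact hgt_le_north μ j
  have Ci : Cx ν.length (hgt μ) (hgt μ i + 1) = i + 1 := by
    have a := L i (by omega) (hgt μ i + 1)
    have b := L (i + 1) (by omega) (hgt μ i + 1)
    omega
  rw [hz j hj, hz i (by omega)] at hH
  have hpi := hp i (by omega)
  have hpj := hp j (by omega)
  have hgt' : ∀ t, i < t → t < j → fpos ν (hgt μ i) - i < fpos ν (hgt μ t) - t := by
    intro t
    induction t with
    | zero => intro h; omega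
    | succ t ih =>
      intro h1 h2
      have a := hne (t + 1) h1 h2
      rw [hz (t + 1) (by omega), hz i (by omega)] at a
      have hpt := hp (t + 1) (by omega)
      have hpt0 := hp t (by omega)
      rcases Nat.lt_or_ge i t with h3 | h3
      · have b := ih h3 (by omega)
        have c := hgt_succ_le μ t
        have d := hgt_mono μ (show t ≤ t + 1 by omega)
        have e : fpos ν (hgt μ t) ≤ fpos ν (hgt μ (t + 1)) := by
          rcases Nat.lt_or_ge (hgt μ t) (hgt μ (t + 1)) with h4 | h4
          · exact le_of_lt (fpos_lt ν h4 (by rw [← hn]; exact hgt_le_north μ _))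
          · rw [show hgt μ t = hgt μ (t + 1) by omega]
        omega
      · have hti : t = i := by omega
        subst hti
        have := fpos_lt ν (show hgt μ t < hgt μ (t + 1) by omega)
          (by rw [← hn]; exact hgt_le_north μ _)
        omega
  refine ⟨by omega, hjn, ?_, ?_, ?_⟩
  · have a := L (i - 1) (by omega) (hgt μ i)
    omega
  · intro l h1 h2
    have hlt := Cx_path_lt μ (show l ≤ northSteps μ by omega)
    rw [hl] at hlt
    have hle := Cx_le ν.length (hgt μ) (l + 1)
    obtain ⟨t, ht⟩ : ∃ t, Cx ν.length (hgt μ) (l + 1) = t + 1 :=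
      ⟨Cx ν.length (hgt μ) (l + 1) - 1, by omega⟩
    have a := L t (by omega) (l + 1)
    have b := L t (by omega) l
    have htl : hgt μ t = l := by omega
    have hit : i < t := by
      by_contra hc
      have := hgt_mono μ (show t ≤ i by omega)
      omega
    have htj : t < j := by
      by_contra hc
      have := hgt_mono μ (show j ≤ t by omega)
      omega
    have := hgt' t hit htj
    rw [htl] at this
    omega
  · have a := L j hj (hgt μ j + 1)
    omega

theorem cover_backward {ν μ : List Bool} (hμ : IsNuPath ν μ) {k v : ℕ}
    (R : RotData ν (Cx ν.length (hgt μ)) k v) :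
    ∃ μ', TamariCover ν μ μ' ∧
      ∀ l, Cx ν.length (hgt μ') l + (if k < l ∧ l ≤ v then 1 else 0) = Cx ν.length (hgt μ) l := by
  obtain ⟨hl, hn, hp⟩ := (nuPath_iff ν μ).1 hμ
  obtain ⟨hkv, hvn, h2, hg, hle⟩ := R
  have hz : ∀ t ≤ ν.length, horiz ν (pointAt μ t) = fpos ν (hgt μ t) - t :=
    fun t ht => horiz_point ν μ hμ ht
  have L : ∀ t ≤ ν.length, ∀ k, _ := fun t ht k => hgt_lt_iff μ ν.length ht k
  obtain ⟨i, hCi⟩ : ∃ i, Cx ν.length (hgt μ) (k + 1) = i + 1 :=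
    ⟨Cx ν.length (hgt μ) (k + 1) - 1, by omega⟩
  have hlt1 := Cx_path_lt μ (show k + 1 ≤ northSteps μ by omega)
  rw [hl] at hlt1
  have hle1 := Cx_le ν.length (hgt μ) (k + 1 + 1)
  have hil : i + 1 ≤ ν.length := by omega
  have hi : hgt μ i = k := by
    have a := L i (by omega) (k + 1)
    have b := L i (by omega) k
    omega
  have hi' : hgt μ (i - 1) = k := by
    have a := L (i - 1) (by omega) (k + 1)
    have b := L (i - 1) (by omega) k
    omega
  have hi1 : hgt μ (i + 1) = k + 1 := by
    have a := L (i + 1) (by omega) (k + 1)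
    have b := hgt_succ_le μ i
    omega
  have hpi := hp i (by omega)
  rw [hi] at hpi
  have hfkv := fpos_lt ν hkv hvn
  have hfv := fpos_spec ν hvn
  obtain ⟨j, hj⟩ : ∃ j, j + (fpos ν k - i) = fpos ν v :=
    ⟨fpos ν v - (fpos ν k - i), by omega⟩
  have hij : i < j := by omega
  have hjl : j ≤ ν.length := by omega
  have hCv := Cx_path_le hμ hvn
  have hjv : hgt μ j = v := by
    have a := L j hjl (v + 1)
    have b := L j hjl v
    have c : Cx ν.length (hgt μ) v ≤ j := by
      rcases Nat.lt_or_ge (k + 1) v with h | h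
      · obtain ⟨w, rfl⟩ : ∃ w, v = w + 1 := ⟨v - 1, by omega⟩
        have := hg w (by omega) (by omega)
        have := fpos_lt ν (show w < w + 1 by omega) hvn
        omega
      · rw [show v = k + 1 by omega, hCi]; omega
    omega
  have he : hgt μ i = hgt μ (i - 1) := by omega
  obtain ⟨hlen, hh⟩ := rot_spec μ (show 0 < i by omega) hij (by omega) he
  have hrot := fun l => rot_Cx μ (show 0 < i by omega) hij (by omega) he l
  rw [hl] at hrot
  rw [hi, hjv] at hrot
  refine ⟨rotPath μ i j, ⟨hμ, ?_, i, j, by omega, hij, by omega, ?_, ?_, ?_, ?_, rfl⟩, hrot⟩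
  · rw [nuPath_iff]
    refine ⟨by omega, ?_, ?_⟩
    · rw [← hgt_of_le (rotPath μ i j) (show _ ≤ ν.length by omega), hh, if_pos (Or.inr hjl),
        hgt_of_le μ (by omega), hn]
    · intro t ht
      rw [hh]
      split_ifs with hc
      · exact hp t ht
      · have := hp (t + 1) (by omega)
        omega
  · have h1 := getD_true_iff μ (show i - 1 < μ.length by omega) true
    rw [show i - 1 + 1 = i by omega] at h1
    by_contra hc
    have := h1.1 (by simpa using hc)
    omega
  · rw [getD_true_iff μ (by omega)]; omega
  · rw [hz j hjl, hz i (by omega), hjv, hi]; omega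
  · intro t h1 h3
    rw [hz t (by omega), hz i (by omega), hi]
    have a := hgt_mono μ (show i + 1 ≤ t by omega)
    have b := hgt_mono μ (show t ≤ j by omega)
    rcases Nat.lt_or_ge (hgt μ t) v with h4 | h4
    · have c := hg (hgt μ t) (by omega) h4
      have d := L t (by omega) (hgt μ t + 1)
      omega
    · rw [show hgt μ t = v by omega]; omega

/-! Translating between paths and bracket vectors -/

theorem Hcard {ν μ : List Bool} (h : IsNuPath ν μ) {j : ℕ} (hj : j ≤ northSteps ν) :
    (Hset ν (bf ν μ) j).card = fpos ν j + 1 - Cx ν.length (hgt μ) (j + 1) := by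
  obtain ⟨h1, h2⟩ := bf_spec h
  have := H_add h1 hj
  rw [h2 (j + 1) (by omega)] at this
  omega

theorem path_inj {ν μ μ' : List Bool} (h : IsNuPath ν μ) (h' : IsNuPath ν μ')
    (hc : ∀ k ≤ northSteps ν + 1, Cx ν.length (hgt μ) k = Cx ν.length (hgt μ') k) : μ = μ' := by
  obtain ⟨hl, hn, hp⟩ := (nuPath_iff ν μ).1 h
  obtain ⟨hl', hn', hp'⟩ := (nuPath_iff ν μ').1 h'
  apply path_ext (by omega)
  intro k
  rw [hl]
  rcases Nat.lt_or_ge (northSteps ν + 1) k with hk | hk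
  · unfold Cx
    congr 1
    ext i
    have := hgt_le_north μ i
    have := hgt_le_north μ' i
    simp only [Finset.mem_filter, Finset.mem_range]
    omega
  · exact hc k hk

theorem bf_inj {ν μ μ' : List Bool} (h : IsNuPath ν μ) (h' : IsNuPath ν μ')
    (hb : ∀ i ≤ ν.length, bf ν μ i = bf ν μ' i) : μ = μ' := by
  apply path_inj h h'
  intro k hk
  rw [← (bf_spec h).2 k hk, ← (bf_spec h').2 k hk]
  unfold Cx
  congr 1
  apply Finset.filter_congr
  intro i hi
  rw [hb i (by simpa [Nat.lt_succ_iff] using hi)]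

/-- effect of a rotation on bracket vectors -/
theorem bf_rot {ν μ μ' : List Bool} (h : IsNuPath ν μ) (h' : IsNuPath ν μ') {k v s : ℕ}
    (hs : First ν (bf ν μ) k s) (R : RotData ν (Cx ν.length (hgt μ)) k v)
    (hC : ∀ l, Cx ν.length (hgt μ') l + (if k < l ∧ l ≤ v then 1 else 0) =
      Cx ν.length (hgt μ) l) :
    ∀ i ≤ ν.length, bf ν μ' i = Function.update (bf ν μ) s v i := by
  have hkv := R.kv
  have hvn := R.vn
  have hB := (bf_spec h).1
  have hU : Bv ν (Function.update (bf ν μ) s v) := by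
    apply Bv_update hB hs hkv hvn
    · intro j h1 h2
      rw [Hcard h (by omega), Hcard h (by omega)]
      exact R.gt j h1 h2
    · rw [Hcard h (by omega), Hcard h (by omega)]
      exact R.le
  apply Bv_unique (bf_spec h').1 hU
  intro l hl
  have a := Cx_update hs hkv (l + 1)
  have b := hC (l + 1)
  rw [(bf_spec h).2 (l + 1) (by omega)] at a
  rw [(bf_spec h').2 (l + 1) (by omega)]
  omega

theorem two_iff {ν : List Bool} {b : ℕ → ℕ} (h : Bv ν b) {k : ℕ} (hk : k < northSteps ν)
    (h2 : Cx ν.length b k + 2 ≤ Cx ν.length b (k + 1)) : ∃ s, First ν b k s := by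
  have hfix := h.fix k (by omega)
  have hex : ∃ s, b s = k := ⟨_, hfix⟩
  refine ⟨Nat.find hex, hk, Nat.find_spec hex, ?_, fun i hi => Nat.find_min hex hi⟩
  rcases Nat.lt_or_ge (Nat.find hex) (fpos ν k) with h1 | h1
  · exact h1
  · exfalso
    have hss : (Finset.range (ν.length + 1)).filter (fun i => b i < k + 1) ⊆
        insert (fpos ν k) ((Finset.range (ν.length + 1)).filter (fun i => b i < k)) := by
      intro i hi
      simp only [Finset.mem_insert, Finset.mem_filter, Finset.mem_range] at hi ⊢
      by_cases hik : b i < k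
      · right; omega
      · left
        have h3 := h.le_f' (show i ≤ ν.length by omega) (show k ≤ northSteps ν by omega) (by omega)
        have h4 := Nat.find_min' hex (show b i = k by omega)
        omega
    have a := Finset.card_le_card hss
    have c := Finset.card_insert_le (fpos ν k)
      ((Finset.range (ν.length + 1)).filter (fun i => b i < k))
    unfold Cx at h2
    omega

theorem two_of_first {ν : List Bool} {b : ℕ → ℕ} (h : Bv ν b) {k s : ℕ} (hs : First ν b k s) :
    Cx ν.length b k + 2 ≤ Cx ν.length b (k + 1) := by
  have hfix := h.fix k (le_of_lt hs.kn)
  have hf := (fpos_spec ν (le_of_lt hs.kn)).1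
  have hlt := hs.lt
  have hv := hs.val
  unfold Cx
  have hss : insert s (insert (fpos ν k)
      ((Finset.range (ν.length + 1)).filter (fun i => b i < k))) ⊆
      (Finset.range (ν.length + 1)).filter (fun i => b i < k + 1) := by
    intro i hi
    simp only [Finset.mem_insert, Finset.mem_filter, Finset.mem_range] at hi ⊢
    rcases hi with rfl | rfl | hi <;> omega
  have a := Finset.card_le_card hss
  rw [Finset.card_insert_of_notMem, Finset.card_insert_of_notMem] at a
  · omega
  · simp only [Finset.mem_filter]; omega
  · simp only [Finset.mem_insert, Finset.mem_filter]; omega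

theorem cover_le {ν μ μ' : List Bool} (h : TamariCover ν μ μ') :
    ∀ i ≤ ν.length, bf ν μ i ≤ bf ν μ' i := by
  obtain ⟨k, v, R, hC⟩ := cover_forward h
  have hkv := R.kv
  have hvn := R.vn
  have h2 := R.two
  have hb := bf_spec h.1
  rw [← hb.2 k (by omega), ← hb.2 (k + 1) (by omega)] at h2
  obtain ⟨s, hs⟩ := two_iff hb.1 (by omega) h2
  intro i hi
  rw [bf_rot h.1 h.2.1 hs R hC i hi]
  by_cases e : i = s
  · subst e
    rw [Function.update_self, hs.val]; omega
  · rw [Function.update_of_ne e]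

theorem le_tamari {ν μ' : List Bool} (h' : IsNuPath ν μ') (N : ℕ) :
    ∀ μ, IsNuPath ν μ → (∑ i ∈ Finset.range (ν.length + 1), (bf ν μ' i - bf ν μ i)) = N →
      (∀ i ≤ ν.length, bf ν μ i ≤ bf ν μ' i) → TamariLE ν μ μ' := by
  induction N using Nat.strong_induction_on with
  | _ N ih =>
    intro μ h hN hle
    by_cases hne : ∃ i ≤ ν.length, bf ν μ i ≠ bf ν μ' i
    · obtain ⟨k, s, v, hs, hkv, hvn, hg, hl, hvD⟩ :=
        exists_step (bf_spec h).1 (bf_spec h').1 hle hne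
      have R : RotData ν (Cx ν.length (hgt μ)) k v := by
        refine ⟨hkv, hvn, ?_, ?_, ?_⟩
        · have := two_of_first (bf_spec h).1 hs
          rwa [(bf_spec h).2 k (by omega), (bf_spec h).2 (k + 1) (by omega)] at this
        · intro l h1 h2
          have := hg l h1 h2
          rwa [Hcard h (by omega), Hcard h (by omega)] at this
        · rwa [Hcard h (by omega), Hcard h (by omega)] at hl
      obtain ⟨μ₁, hcov, hC⟩ := cover_backward h R
      have hb := bf_rot h hcov.2.1 hs R hC
      have hsl := hs.le
      have hsv := hs.val
      have hle1 : ∀ i ≤ ν.length, bf ν μ₁ i ≤ bf ν μ' i := by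
        intro i hi
        rw [hb i hi]
        by_cases e : i = s
        · subst e
          rw [Function.update_self]; exact hvD
        · rw [Function.update_of_ne e]; exact hle i hi
      refine Relation.ReflTransGen.head hcov (ih _ ?_ μ₁ hcov.2.1 rfl hle1)
      rw [← hN]
      have hbs := hb s hsl
      rw [Function.update_self] at hbs
      apply Finset.sum_lt_sum
      · intro i hi
        have := cover_le hcov i (by simp at hi; omega)
        omega
      · exact ⟨s, by simp; omega, by omega⟩
    · push Not at hne
      have := bf_inj h h' hne
      subst this
      exact Relation.ReflTransGen.refl

theorem listLE_iff (ν μ μ' : List Bool) :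
    listLE (bracketOfPath ν μ) (bracketOfPath ν μ') ↔
      ∀ i ≤ ν.length, bf ν μ i ≤ bf ν μ' i := by
  unfold listLE
  rw [length_bracket, length_bracket]
  constructor
  · intro h i _
    exact h.2 i
  · intro h
    refine ⟨rfl, fun i => ?_⟩
    by_cases hi : i ≤ ν.length
    · exact h i hi
    · rw [List.getD_eq_default _ _ (by rw [length_bracket]; omega)]
      exact Nat.zero_le _

theorem exists_nuPath {ν : List Bool} {b : ℕ → ℕ} (h : Bv ν b) :
    ∃ μ, IsNuPath ν μ ∧ ∀ k ≤ northSteps ν + 1, Cx ν.length (hgt μ) k = Cx ν.length b k := by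
  have hlt : ∀ k ≤ northSteps ν, Cx ν.length b k < Cx ν.length b (k + 1) := by
    intro k hk
    unfold Cx
    apply Finset.card_lt_card
    have hf := (fpos_spec ν hk).1
    have hfix := h.fix k hk
    rw [Finset.ssubset_iff_of_subset]
    · exact ⟨fpos ν k, by simp; omega, by simp; omega⟩
    · intro i hi
      simp only [Finset.mem_filter] at hi ⊢
      exact ⟨hi.1, by omega⟩
  have hall : Cx ν.length b (northSteps ν + 1) = ν.length + 1 := by
    unfold Cx
    rw [Finset.filter_true_of_mem, Finset.card_range]
    intro i hi
    have := h.up i (by simp at hi; omega)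
    omega
  obtain ⟨μ, h1, h2, h3⟩ := exists_path (Cx ν.length b) (by simp [Cx]) (northSteps ν) hlt
  have hl : μ.length = ν.length := by omega
  refine ⟨μ, ?_, ?_⟩
  · rw [nuPath_iff]
    refine ⟨hl, h2, fun i hi => ?_⟩
    have hk := hgt_le_north μ i
    have a := (h3 i (by omega) (hgt μ i + 1) (by omega)).1 (by omega)
    have c := H_add h (show hgt μ i ≤ northSteps ν by omega)
    omega
  · intro k hk
    apply eq_of_initial (ℓ := ν.length) (Cx_le _ _ _) (Cx_le _ _ _)
    intro t ht
    rw [← hgt_lt_iff μ ν.length ht k]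
    exact h3 t (by omega) k hk

end NuBr

open NuBr in
theorem bracket_order_isomorphism (ν : List Bool) :
    Set.BijOn (bracketOfPath ν) {μ | IsNuPath ν μ} {b | IsBracketVector ν b} ∧
    ∀ μ μ', IsNuPath ν μ → IsNuPath ν μ' →
      (TamariLE ν μ μ' ↔ listLE (bracketOfPath ν μ) (bracketOfPath ν μ')) := by
  refine ⟨⟨?_, ?_, ?_⟩, ?_⟩
  · intro μ hμ
    exact (isBracket_iff ν _).2 ⟨length_bracket ν μ, (bf_spec hμ).1⟩
  · intro μ hμ μ' hμ' e
    apply bf_inj hμ hμ'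
    intro i _
    unfold bf
    rw [e]
  · intro l hl
    obtain ⟨hlen, hb⟩ := (isBracket_iff ν l).1 hl
    obtain ⟨μ, hμ, hC⟩ := exists_nuPath hb
    refine ⟨μ, hμ, ?_⟩
    have hu := Bv_unique (bf_spec hμ).1 hb (fun k hk => by
      rw [(bf_spec hμ).2 _ (by omega), hC _ (by omega)])
    apply List.ext_getElem (by rw [length_bracket, hlen])
    intro i h1 h2
    have := hu i (by omega)
    unfold bf at this
    rwa [List.getD_eq_getElem _ _ h1, List.getD_eq_getElem _ _ h2] at this
  · intro μ μ' hμ hμ'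
    rw [listLE_iff]
    constructor
    · intro h
      induction h with
      | refl => exact fun i _ => le_rfl
      | tail _ hcov ih =>
        intro i hi
        exact (ih hcov.1 i hi).trans (cover_le hcov i hi)
    · intro h
      exact le_tamari hμ' _ μ hμ rfl h
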